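/- Combined a posteriori error bound (Proposition 3). Suppose (y^k)_{k=0..K} ⊂ Y, (p^k)_{k=1..K+1} ⊂ Y and controls u^0, u^1,…,u^K ∈ U satisfy the combined optimality system: y^0 = u^0; m(y^k − y^{k−1}, φ) + τ a(y^k, φ) = τ b(u^k, φ) + τ f(φ) for all φ ∈ Y and k = 1,…,K; p^{K+1} = 0; m(φ, p^k − p^{k+1}) + τ a(φ, p^k) = τ (z_d^k − C y^k, C φ)_D for all φ ∈ Y and k = 1,…,K; (u^k − u_d^k, ψ)_U − b(ψ, p^k) = 0 for all ψ ∈ U and k = 1,…,K; and (u^0 − u_d^0, ψ)_U − m(ψ, p^1) = 0 for all ψ ∈ U. Let (y_N^k)_{k=0..K} ⊂ Y, (p_N^k)_{k=1..K+1} ⊂ Y and u_N^0, u_N^1,…,u_N^K ∈ U be any candidate with y_N^0 = u_N^0 and p_N^{K+1} = 0, and define the residuals r̃_y^k(φ) = f(φ) + b(u_N^k, φ) − a(y_N^k, φ) − (1/τ) m(y_N^k − y_N^{k−1}, φ), r̃_p^k(φ) = (z_d^k − C y_N^k, C φ)_D − a(φ, p_N^k) − (1/τ) m(φ, p_N^k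 − p_N^{k+1}) for φ ∈ Y, r̃_u^k(ψ) = b(ψ, p_N^k) − (u_N^k − u_d^k, ψ)_U and r_u^0(ψ) = m(ψ, p_N^1) − (u_N^0 − u_d^0, ψ)_U for ψ ∈ U, and set R̃_y = (τ Σ_{k=1}^K ‖r̃_y^k‖_{Y'}²)^{1/2}, R̃_p = (τ Σ_{k=1}^K ‖r̃_p^k‖_{Y'}²)^{1/2}, R̃_u = (τ Σ_{k=1}^K ‖r̃_u^k‖_{U'}²)^{1/2}. Then (‖u^0 − u_N^0‖_U² + τ Σ_{k=1}^K ‖u^k − u_N^k‖_U²)^{1/2} ≤ c₁ + √(c₁² + c₂), where c₁ = (1/2)[(‖r_u^0‖_{U'}² + R̃_u²)^{1/2} + (2 γ_b²/α_LB² + 1/α_LB)^{1/2} R̃_p] and c₂ = (2√2/α_LB) R̃_y R̃_p + (γ_c²/(2 α_LB²)) R̃_y². -/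

import Mathlib

set_option autoImplicit false

open Finset RealInnerProductSpace

/-- Dual norm of a functional `r` over the nonzero elements of `S`,
with respect to the norm function `nrm`. -/
noncomputable def dualNorm {Y : Type*} [Zero Y] (nrm : Y → ℝ) (S : Set Y) (r : Y → ℝ) : ℝ :=
  sSup {x : ℝ | ∃ v ∈ S, v ≠ 0 ∧ x = r v / nrm v}

lemma le_of_sq_le_sq_aux {x y : ℝ} (h : x ^ 2 ≤ y ^ 2) (hy : 0 ≤ y) : x ≤ y :=
  abs_le_of_sq_le_sq' h hy |>.2

lemma aux_tele (F : ℕ → ℝ) (K : ℕ) : ∑ k ∈ Icc 1 K, (F k - F (k - 1)) = F K - F 0 := by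
  induction K with
  | zero => simp
  | succ n ih => rw [Finset.sum_Icc_succ_top (by omega), ih]; simp

lemma aux_tele' (F : ℕ → ℝ) (K : ℕ) : ∑ k ∈ Icc 1 K, (F k - F (k + 1)) = F 1 - F (K + 1) := by
  induction K with
  | zero => simp
  | succ n ih => rw [Finset.sum_Icc_succ_top (by omega), ih]; ring

lemma aux_cs (τ : ℝ) (hτ : 0 < τ) (s : Finset ℕ) (x z : ℕ → ℝ) :
    τ * ∑ k ∈ s, x k * z k ≤
      Real.sqrt (τ * ∑ k ∈ s, x k ^ 2) * Real.sqrt (τ * ∑ k ∈ s, z k ^ 2) := by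
  rw [Real.sqrt_mul hτ.le, Real.sqrt_mul hτ.le]
  have h := Real.sum_mul_le_sqrt_mul_sqrt s x z
  have h2 := Real.mul_self_sqrt hτ.le
  calc τ * ∑ k ∈ s, x k * z k
      ≤ τ * (Real.sqrt (∑ k ∈ s, x k ^ 2) * Real.sqrt (∑ k ∈ s, z k ^ 2)) := by gcongr
    _ = (Real.sqrt τ * Real.sqrt τ) *
        (Real.sqrt (∑ k ∈ s, x k ^ 2) * Real.sqrt (∑ k ∈ s, z k ^ 2)) := by rw [h2]
    _ = _ := by ring

lemma aux_dual {Y : Type*} [NormedAddCommGroup Y] [NormedSpace ℝ Y] [FiniteDimensional ℝ Y]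
    {H : Type*} [NormedAddCommGroup H] [NormedSpace ℝ H]
    (ι : Y →ₗ[ℝ] H) (hι : Function.Injective ι) (S : Set Y) (r : Y →ₗ[ℝ] ℝ) (v : Y) (hv : v ∈ S) :
    r v ≤ dualNorm (fun v : Y => ‖ι v‖) S ⇑r * ‖ι v‖ := by
  by_cases h0 : v = 0
  · simp [h0]
  have hpos : ∀ w : Y, w ≠ 0 → 0 < ‖ι w‖ := fun w hw => by
    rw [norm_pos_iff]
    intro h
    exact hw (hι (by simpa using h))
  rw [← div_le_iff₀ (hpos v h0)]
  apply le_csSup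
  · obtain ⟨c, hc, hcl⟩ := ι.exists_antilipschitzWith (LinearMap.ker_eq_bot.mpr hι)
    refine ⟨‖r.toContinuousLinearMap‖ * c, ?_⟩
    rintro x ⟨w, -, hw, rfl⟩
    rw [div_le_iff₀ (hpos w hw)]
    have h1 : ‖w‖ ≤ c * ‖ι w‖ := by simpa using hcl.le_mul_dist w 0
    have h2 : r w ≤ ‖r.toContinuousLinearMap‖ * ‖w‖ :=
      (le_abs_self _).trans (r.toContinuousLinearMap.le_opNorm w)
    calc r w ≤ ‖r.toContinuousLinearMap‖ * ‖w‖ := h2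
      _ ≤ ‖r.toContinuousLinearMap‖ * (c * ‖ι w‖) := by gcongr
      _ = _ := by ring
  · exact ⟨v, hv, h0, rfl⟩

lemma aux_dual1 {Y : Type*} [NormedAddCommGroup Y] [NormedSpace ℝ Y] [FiniteDimensional ℝ Y]
    (r : Y →ₗ[ℝ] ℝ) (v : Y) :
    r v ≤ dualNorm (fun v : Y => ‖v‖) Set.univ ⇑r * ‖v‖ :=
  aux_dual LinearMap.id Function.injective_id Set.univ r v (Set.mem_univ v)

/-- The purely scalar end of the argument. -/
lemma aux_final (α γb γc d0 n0 Ry Rp Ru X P Z Eu E c1 c2 : ℝ) (hα : 0 < α)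
    (hRy : 0 ≤ Ry) (hRp : 0 ≤ Rp) (hP : 0 ≤ P)
    (hE : 0 ≤ E) (hEE : E ^ 2 = n0 ^ 2 + Eu ^ 2)
    (hc1 : c1 = (1 / 2) * (Real.sqrt (d0 ^ 2 + Ru ^ 2)
      + Real.sqrt (2 * γb ^ 2 / α ^ 2 + 1 / α) * Rp))
    (hc2 : c2 = (2 * Real.sqrt 2 / α) * Ry * Rp + γc ^ 2 / (2 * α ^ 2) * Ry ^ 2)
    (h1 : α * X ^ 2 ≤ n0 ^ 2 / 2 + (γb * Eu + Ry) * X)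
    (h2 : α * P ^ 2 ≤ Rp * P + |γc| * Z * P)
    (h3 : E ^ 2 ≤ d0 * n0 + Ru * Eu + Ry * P + Rp * X - Z ^ 2) (hZ : 0 ≤ Z) :
    E ≤ c1 + Real.sqrt (c1 ^ 2 + c2) := by
  have hs2 : Real.sqrt 2 ^ 2 = 2 := Real.sq_sqrt (by norm_num)
  have hs2' : 1 ≤ Real.sqrt 2 := Real.one_le_sqrt.mpr (by norm_num)
  set q := Real.sqrt (2 * γb ^ 2 / α ^ 2 + 1 / α) with hq
  have hq0 : 0 ≤ q := Real.sqrt_nonneg _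
  have hq2 : q ^ 2 = 2 * γb ^ 2 / α ^ 2 + 1 / α := Real.sq_sqrt (by positivity)
  set w := Real.sqrt (d0 ^ 2 + Ru ^ 2) with hw
  have hw0 : 0 ≤ w := Real.sqrt_nonneg _
  have hw2 : w ^ 2 = d0 ^ 2 + Ru ^ 2 := Real.sq_sqrt (by positivity)
  have hA : d0 * n0 + Ru * Eu ≤ w * E := by
    apply le_of_sq_le_sq_aux _ (by positivity)
    rw [mul_pow, hw2, hEE]
    linarith [sq_nonneg (d0 * Eu - Ru * n0)]
  have hPb : P ≤ (Rp + |γc| * Z) / α := by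
    rw [le_div_iff₀ hα]
    rcases hP.eq_or_lt with h | h
    · rw [← h]; simp; positivity
    · have : (P * α) * P ≤ (Rp + |γc| * Z) * P := by linarith
      exact le_of_mul_le_mul_right this h
  have hX2 : X ^ 2 ≤ n0 ^ 2 / α + 2 * γb ^ 2 / α ^ 2 * Eu ^ 2 + 2 * Ry ^ 2 / α ^ 2 := by
    have e : n0 ^ 2 / α + 2 * γb ^ 2 / α ^ 2 * Eu ^ 2 + 2 * Ry ^ 2 / α ^ 2
      = (n0 ^ 2 * α + 2 * γb ^ 2 * Eu ^ 2 + 2 * Ry ^ 2) / α ^ 2 := by field_simp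
    rw [e, le_div_iff₀ (by positivity)]
    linarith [mul_le_mul_of_nonneg_left h1 hα.le, sq_nonneg (α * X - 2 * (γb * Eu)),
      sq_nonneg (α * X - 2 * Ry)]
  have hXb : X ≤ q * E + Real.sqrt 2 * Ry / α := by
    apply le_of_sq_le_sq_aux _ (by positivity)
    have e : (Real.sqrt 2 * Ry / α) ^ 2 = 2 * Ry ^ 2 / α ^ 2 := by
      rw [div_pow, mul_pow, hs2]
    have e2 : 0 ≤ q * E * (Real.sqrt 2 * Ry / α) := by positivity
    have e3 : n0 ^ 2 / α + 2 * γb ^ 2 / α ^ 2 * Eu ^ 2 ≤ q ^ 2 * E ^ 2 := by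
      rw [hq2, hEE]
      have : 0 ≤ 2 * γb ^ 2 / α ^ 2 * n0 ^ 2 := by positivity
      have : 0 ≤ 1 / α * Eu ^ 2 := by positivity
      have : n0 ^ 2 / α = 1 / α * n0 ^ 2 := by ring
      linarith
    linarith
  have hB : Ry * P - Z ^ 2 ≤ Ry * Rp / α + γc ^ 2 / (2 * α ^ 2) * Ry ^ 2 := by
    have t1 : Ry * P ≤ Ry * ((Rp + |γc| * Z) / α) := by gcongr
    have t2 : Ry * ((Rp + |γc| * Z) / α) = Ry * Rp / α + (Ry * |γc| / α) * Z := by ring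
    have t3 : γc ^ 2 / (2 * α ^ 2) * Ry ^ 2 = (Ry * |γc| / α) ^ 2 / 2 := by
      rw [div_pow, mul_pow, sq_abs]; ring
    rw [t3]
    rw [t2] at t1
    generalize Ry * |γc| / α = t at *
    have t4 : t * Z - Z ^ 2 ≤ t ^ 2 / 2 := by nlinarith [sq_nonneg (t - 2 * Z), sq_nonneg t]
    linarith
  have hC : Rp * X ≤ Rp * (q * E + Real.sqrt 2 * Ry / α) := by gcongr
  have hD : Ry * Rp / α ≤ Real.sqrt 2 * (Ry * Rp / α) :=
    le_mul_of_one_le_left (by positivity) hs2'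
  have hmain : E ^ 2 ≤ 2 * c1 * E + c2 := by
    have e1 : 2 * Real.sqrt 2 / α * Ry * Rp = 2 * (Real.sqrt 2 * (Ry * Rp / α)) := by ring
    have e2 : Rp * (q * E + Real.sqrt 2 * Ry / α)
      = Rp * q * E + Real.sqrt 2 * (Ry * Rp / α) := by ring
    rw [hc1, hc2, e1]
    linarith
  have : E - c1 ≤ Real.sqrt (c1 ^ 2 + c2) := by
    apply Real.le_sqrt_of_sq_le
    linarith
  linarith

/-- Combined a posteriori error bound (Proposition 3). -/
theorem combined_a_posteriori_error_bound
    {H Y D : Type*} [NormedAddCommGroup H] [InnerProductSpace ℝ H]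
    [NormedAddCommGroup Y] [InnerProductSpace ℝ Y] [FiniteDimensional ℝ Y]
    [NormedAddCommGroup D] [InnerProductSpace ℝ D]
    (ι : Y →ₗ[ℝ] H) (hι : Function.Injective ι)
    (U : Submodule ℝ Y)
    (a : Y →ₗ[ℝ] (Y →ₗ[ℝ] ℝ))
    (τ : ℝ) (hτ : 0 < τ) (K : ℕ) (hK : 1 ≤ K)
    (αLB : ℝ) (hαLB : 0 < αLB) (hcoer : ∀ v : Y, αLB * ‖v‖ ^ 2 ≤ a v v)
    (C : Y →ₗ[ℝ] D) (γc : ℝ) (hγc : ∀ v : Y, ‖C v‖ ≤ γc * ‖v‖)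
    (b : Y →ₗ[ℝ] (Y →ₗ[ℝ] ℝ)) (γb : ℝ)
    (hγb : ∀ w ∈ U, ∀ v : Y, |b w v| ≤ γb * ‖ι w‖ * ‖v‖)
    (f : Y →ₗ[ℝ] ℝ) (zd : ℕ → D) (ud : ℕ → Y)
    (hud : ∀ k ≤ K, ud k ∈ U)
    (y p yN pN : ℕ → Y) (u uN : ℕ → Y)
    (hu : ∀ k ≤ K, u k ∈ U) (huN : ∀ k ≤ K, uN k ∈ U)
    (hy0 : y 0 = u 0)
    (hstate : ∀ k, 1 ≤ k → k ≤ K → ∀ φ : Y,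
      ⟪ι (y k - y (k - 1)), ι φ⟫ + τ * a (y k) φ = τ * b (u k) φ + τ * f φ)
    (hpfin : p (K + 1) = 0)
    (hadj : ∀ k, 1 ≤ k → k ≤ K → ∀ φ : Y,
      ⟪ι φ, ι (p k - p (k + 1))⟫ + τ * a φ (p k) = τ * ⟪zd k - C (y k), C φ⟫)
    (hopt : ∀ k, 1 ≤ k → k ≤ K → ∀ ψ ∈ U,
      ⟪ι (u k - ud k), ι ψ⟫ - b ψ (p k) = 0)
    (hopt0 : ∀ ψ ∈ U, ⟪ι (u 0 - ud 0), ι ψ⟫ - ⟪ι ψ, ι (p 1)⟫ = 0)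
    (hyN0 : yN 0 = uN 0) (hpNfin : pN (K + 1) = 0)
    (ry rp ru : ℕ → (Y →ₗ[ℝ] ℝ)) (ru0 : Y →ₗ[ℝ] ℝ)
    (hry : ∀ k, 1 ≤ k → k ≤ K → ∀ φ : Y,
      ry k φ = f φ + b (uN k) φ - a (yN k) φ
        - (1 / τ) * ⟪ι (yN k - yN (k - 1)), ι φ⟫)
    (hrp : ∀ k, 1 ≤ k → k ≤ K → ∀ φ : Y,
      rp k φ = ⟪zd k - C (yN k), C φ⟫ - a φ (pN k)
        - (1 / τ) * ⟪ι φ, ι (pN k - pN (k + 1))⟫)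
    (hru : ∀ k, 1 ≤ k → k ≤ K → ∀ ψ ∈ U,
      ru k ψ = b ψ (pN k) - ⟪ι (uN k - ud k), ι ψ⟫)
    (hru0 : ∀ ψ ∈ U, ru0 ψ = ⟪ι ψ, ι (pN 1)⟫ - ⟪ι (uN 0 - ud 0), ι ψ⟫)
    (Ry Rp Ru c1 c2 : ℝ)
    (hRy : Ry = Real.sqrt (τ * ∑ k ∈ Icc 1 K, (dualNorm (fun v : Y => ‖v‖) Set.univ ⇑(ry k)) ^ 2))
    (hRp : Rp = Real.sqrt (τ * ∑ k ∈ Icc 1 K, (dualNorm (fun v : Y => ‖v‖) Set.univ ⇑(rp k)) ^ 2))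
    (hRu : Ru = Real.sqrt (τ * ∑ k ∈ Icc 1 K, (dualNorm (fun v : Y => ‖ι v‖) (U : Set Y) ⇑(ru k)) ^ 2))
    (hc1 : c1 = (1 / 2) * (Real.sqrt ((dualNorm (fun v : Y => ‖ι v‖) (U : Set Y) ⇑ru0) ^ 2 + Ru ^ 2)
      + Real.sqrt (2 * γb ^ 2 / αLB ^ 2 + 1 / αLB) * Rp))
    (hc2 : c2 = (2 * Real.sqrt 2 / αLB) * Ry * Rp + γc ^ 2 / (2 * αLB ^ 2) * Ry ^ 2) :
    Real.sqrt (‖ι (u 0 - uN 0)‖ ^ 2 + τ * ∑ k ∈ Icc 1 K, ‖ι (u k - uN k)‖ ^ 2)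
      ≤ c1 + Real.sqrt (c1 ^ 2 + c2) := by
  -- errors
  obtain ⟨ey, hey⟩ : ∃ e : ℕ → Y, ∀ k, e k = y k - yN k := ⟨_, fun _ => rfl⟩
  obtain ⟨ep, hep⟩ : ∃ e : ℕ → Y, ∀ k, e k = p k - pN k := ⟨_, fun _ => rfl⟩
  obtain ⟨eu, heu⟩ : ∃ e : ℕ → Y, ∀ k, e k = u k - uN k := ⟨_, fun _ => rfl⟩
  have heuU : ∀ k ≤ K, eu k ∈ U := fun k hk => by
    rw [heu]; exact U.sub_mem (hu k hk) (huN k hk)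
  have hey0 : ey 0 = eu 0 := by rw [hey, heu, hy0, hyN0]
  have hepK : ep (K + 1) = 0 := by rw [hep, hpfin, hpNfin, sub_zero]
  -- error equations
  have E1 : ∀ k, 1 ≤ k → k ≤ K → ∀ φ : Y,
      ⟪ι (ey k), ι φ⟫ - ⟪ι (ey (k - 1)), ι φ⟫ + τ * a (ey k) φ
        = τ * b (eu k) φ + τ * ry k φ := by
    intro k h1 h2 φ
    have A := hstate k h1 h2 φ
    have B := hry k h1 h2 φ
    have B' : τ * ry k φ = τ * f φ + τ * b (uN k) φ - τ * a (yN k) φ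
        - ⟪ι (yN k - yN (k - 1)), ι φ⟫ := by
      rw [B]; field_simp
    rw [B']
    simp only [hey, heu, map_sub, LinearMap.sub_apply, inner_sub_left] at A ⊢
    linarith
  have E2 : ∀ k, 1 ≤ k → k ≤ K → ∀ φ : Y,
      ⟪ι φ, ι (ep k)⟫ - ⟪ι φ, ι (ep (k + 1))⟫ + τ * a φ (ep k)
        = -(τ * ⟪C (ey k), C φ⟫) + τ * rp k φ := by
    intro k h1 h2 φ
    have A := hadj k h1 h2 φ
    have B := hrp k h1 h2 φ
    have B' : τ * rp k φ = τ * ⟪zd k - C (yN k), C φ⟫ - τ * a φ (pN k)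
        - ⟪ι φ, ι (pN k - pN (k + 1))⟫ := by
      rw [B]; field_simp
    rw [B']
    simp only [hey, hep, map_sub, inner_sub_left, inner_sub_right] at A ⊢
    linarith
  have E3 : ∀ k, 1 ≤ k → k ≤ K → ‖ι (eu k)‖ ^ 2 = b (eu k) (ep k) + ru k (eu k) := by
    intro k h1 h2
    have A := hopt k h1 h2 (eu k) (heuU k h2)
    have B := hru k h1 h2 (eu k) (heuU k h2)
    have D1 : ‖ι (eu k)‖ ^ 2 = ⟪ι (u k), ι (eu k)⟫ - ⟪ι (uN k), ι (eu k)⟫ := by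
      rw [← inner_sub_left, ← map_sub, ← heu, real_inner_self_eq_norm_sq]
    have D2 : b (eu k) (ep k) = b (eu k) (p k) - b (eu k) (pN k) := by rw [hep, map_sub]
    rw [map_sub, inner_sub_left] at A B
    linarith
  have E4 : ‖ι (eu 0)‖ ^ 2 = ⟪ι (eu 0), ι (ep 1)⟫ + ru0 (eu 0) := by
    have A := hopt0 (eu 0) (heuU 0 (Nat.zero_le _))
    have B := hru0 (eu 0) (heuU 0 (Nat.zero_le _))
    have D1 : ‖ι (eu 0)‖ ^ 2 = ⟪ι (u 0), ι (eu 0)⟫ - ⟪ι (uN 0), ι (eu 0)⟫ := by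
      rw [← inner_sub_left, ← map_sub, ← heu, real_inner_self_eq_norm_sq]
    have D2 : ⟪ι (eu 0), ι (ep 1)⟫ = ⟪ι (eu 0), ι (p 1)⟫ - ⟪ι (eu 0), ι (pN 1)⟫ := by
      rw [hep, map_sub, inner_sub_right]
    rw [map_sub, inner_sub_left] at A B
    linarith
  -- sums
  obtain ⟨dy, hdy⟩ : ∃ d : ℕ → ℝ, ∀ k, d k = dualNorm (fun v : Y => ‖v‖) Set.univ ⇑(ry k) :=
    ⟨_, fun _ => rfl⟩
  obtain ⟨dp, hdp⟩ : ∃ d : ℕ → ℝ, ∀ k, d k = dualNorm (fun v : Y => ‖v‖) Set.univ ⇑(rp k) :=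
    ⟨_, fun _ => rfl⟩
  obtain ⟨du, hdu⟩ : ∃ d : ℕ → ℝ, ∀ k, d k =
    dualNorm (fun v : Y => ‖ι v‖) (U : Set Y) ⇑(ru k) := ⟨_, fun _ => rfl⟩
  have bry : ∀ k v, ry k v ≤ dy k * ‖v‖ := fun k v => by rw [hdy]; exact aux_dual1 _ _
  have brp : ∀ k v, rp k v ≤ dp k * ‖v‖ := fun k v => by rw [hdp]; exact aux_dual1 _ _
  have bru : ∀ k, ∀ v ∈ U, ru k v ≤ du k * ‖ι v‖ := fun k v hv => by
    rw [hdu]; exact aux_dual ι hι _ _ _ hv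
  have bru0 := aux_dual ι hι (U : Set Y) ru0 (eu 0) (heuU 0 (Nat.zero_le _))
  simp only [← hdy] at hRy
  simp only [← hdp] at hRp
  simp only [← hdu] at hRu
  simp only [← heu]
  set X := Real.sqrt (τ * ∑ k ∈ Icc 1 K, ‖ey k‖ ^ 2) with hX
  set P := Real.sqrt (τ * ∑ k ∈ Icc 1 K, ‖ep k‖ ^ 2) with hP
  set Z := Real.sqrt (τ * ∑ k ∈ Icc 1 K, ‖C (ey k)‖ ^ 2) with hZ
  set Eu := Real.sqrt (τ * ∑ k ∈ Icc 1 K, ‖ι (eu k)‖ ^ 2) with hEu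
  have nn : ∀ g : ℕ → ℝ, 0 ≤ τ * ∑ k ∈ Icc 1 K, g k ^ 2 := fun g =>
    mul_nonneg hτ.le (Finset.sum_nonneg fun _ _ => sq_nonneg _)
  have hX2 : X ^ 2 = τ * ∑ k ∈ Icc 1 K, ‖ey k‖ ^ 2 := Real.sq_sqrt (nn _)
  have hP2 : P ^ 2 = τ * ∑ k ∈ Icc 1 K, ‖ep k‖ ^ 2 := Real.sq_sqrt (nn _)
  have hZ2 : Z ^ 2 = τ * ∑ k ∈ Icc 1 K, ‖C (ey k)‖ ^ 2 := Real.sq_sqrt (nn _)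
  have hEu2 : Eu ^ 2 = τ * ∑ k ∈ Icc 1 K, ‖ι (eu k)‖ ^ 2 := Real.sq_sqrt (nn _)
  -- Cauchy-Schwarz
  have cs1 := aux_cs τ hτ (Icc 1 K) (fun k => ‖ι (eu k)‖) (fun k => ‖ey k‖)
  have cs2 := aux_cs τ hτ (Icc 1 K) dy (fun k => ‖ey k‖)
  have cs3 := aux_cs τ hτ (Icc 1 K) dp (fun k => ‖ep k‖)
  have cs4 := aux_cs τ hτ (Icc 1 K) (fun k => ‖C (ey k)‖) (fun k => ‖ep k‖)
  have cs5 := aux_cs τ hτ (Icc 1 K) du (fun k => ‖ι (eu k)‖)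
  have cs6 := aux_cs τ hτ (Icc 1 K) dy (fun k => ‖ep k‖)
  have cs7 := aux_cs τ hτ (Icc 1 K) dp (fun k => ‖ey k‖)
  simp only [← hRy, ← hRp, ← hRu, ← hX, ← hP, ← hZ, ← hEu] at cs1 cs2 cs3 cs4 cs5 cs6 cs7
  have hcs : ∀ k, |⟪C (ey k), C (ep k)⟫| ≤ |γc| * (‖C (ey k)‖ * ‖ep k‖) := fun k => by
    calc |⟪C (ey k), C (ep k)⟫| ≤ ‖C (ey k)‖ * ‖C (ep k)‖ := abs_real_inner_le_norm _ _
      _ ≤ ‖C (ey k)‖ * (|γc| * ‖ep k‖) := by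
        gcongr
        exact (hγc _).trans (by gcongr; exact le_abs_self _)
      _ = _ := by ring
  have polar : ∀ v w : H, ‖v‖ ^ 2 / 2 - ‖w‖ ^ 2 / 2 ≤ ⟪v, v⟫ - ⟪w, v⟫ := fun v w => by
    rw [real_inner_self_eq_norm_sq]
    have h := real_inner_le_norm w v
    nlinarith [sq_nonneg (‖v‖ - ‖w‖)]
  refine aux_final αLB |γb| γc (dualNorm (fun v : Y => ‖ι v‖) (U : Set Y) ⇑ru0) ‖ι (eu 0)‖
    Ry Rp Ru X P Z Eu _ c1 c2 hαLB (hRy ▸ Real.sqrt_nonneg _) (hRp ▸ Real.sqrt_nonneg _)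
    (Real.sqrt_nonneg _) (Real.sqrt_nonneg _) ?_ (by rw [sq_abs]; exact hc1) hc2 ?_ ?_ ?_
    (Real.sqrt_nonneg _)
  · rw [Real.sq_sqrt (add_nonneg (sq_nonneg _) (nn _)), hEu2]
  · -- state energy estimate
    have key : ∑ k ∈ Icc 1 K, (‖ι (ey k)‖ ^ 2 / 2 - ‖ι (ey (k - 1))‖ ^ 2 / 2)
        + τ * ∑ k ∈ Icc 1 K, αLB * ‖ey k‖ ^ 2
        ≤ τ * ∑ k ∈ Icc 1 K, |γb| * (‖ι (eu k)‖ * ‖ey k‖) + τ * ∑ k ∈ Icc 1 K, dy k * ‖ey k‖ := by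
      simp only [Finset.mul_sum, ← Finset.sum_add_distrib]
      apply Finset.sum_le_sum
      intro k hk
      obtain ⟨h1, h2⟩ := Finset.mem_Icc.mp hk
      have e := E1 k h1 h2 (ey k)
      have hb : b (eu k) (ey k) ≤ |γb| * (‖ι (eu k)‖ * ‖ey k‖) := by
        calc b (eu k) (ey k) ≤ γb * ‖ι (eu k)‖ * ‖ey k‖ :=
              (le_abs_self _).trans (hγb _ (heuU k h2) _)
          _ = γb * (‖ι (eu k)‖ * ‖ey k‖) := by ring
          _ ≤ _ := by gcongr; exact le_abs_self _
      have q1 := mul_le_mul_of_nonneg_left hb hτ.le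
      have q2 := mul_le_mul_of_nonneg_left (bry k (ey k)) hτ.le
      have q3 := mul_le_mul_of_nonneg_left (hcoer (ey k)) hτ.le
      have q4 := polar (ι (ey k)) (ι (ey (k - 1)))
      linarith
    rw [aux_tele (fun k => ‖ι (ey k)‖ ^ 2 / 2) K, hey0, ← Finset.mul_sum, ← Finset.mul_sum] at key
    have q := mul_le_mul_of_nonneg_left cs1 (abs_nonneg γb)
    have q' : 0 ≤ ‖ι (ey K)‖ ^ 2 := sq_nonneg _
    rw [hX2]
    linarith
  · -- adjoint energy estimate
    have key : ∑ k ∈ Icc 1 K, (‖ι (ep k)‖ ^ 2 / 2 - ‖ι (ep (k + 1))‖ ^ 2 / 2)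
        + τ * ∑ k ∈ Icc 1 K, αLB * ‖ep k‖ ^ 2
        ≤ τ * ∑ k ∈ Icc 1 K, |γc| * (‖C (ey k)‖ * ‖ep k‖) + τ * ∑ k ∈ Icc 1 K, dp k * ‖ep k‖ := by
      simp only [Finset.mul_sum, ← Finset.sum_add_distrib]
      apply Finset.sum_le_sum
      intro k hk
      obtain ⟨h1, h2⟩ := Finset.mem_Icc.mp hk
      have e := E2 k h1 h2 (ep k)
      have q1 := mul_le_mul_of_nonneg_left ((neg_le_abs _).trans (hcs k)) hτ.le
      have q2 := mul_le_mul_of_nonneg_left (brp k (ep k)) hτ.le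
      have q3 := mul_le_mul_of_nonneg_left (hcoer (ep k)) hτ.le
      have q4 := polar (ι (ep k)) (ι (ep (k + 1)))
      rw [real_inner_comm (ι (ep k)) (ι (ep (k + 1)))] at q4
      linarith
    rw [aux_tele' (fun k => ‖ι (ep k)‖ ^ 2 / 2) K, hepK, map_zero, norm_zero,
      ← Finset.mul_sum, ← Finset.mul_sum] at key
    have q := mul_le_mul_of_nonneg_left cs4 (abs_nonneg γc)
    have q' : 0 ≤ ‖ι (ep 1)‖ ^ 2 := sq_nonneg _
    rw [hP2]
    linarith
  · rw [Real.sq_sqrt (add_nonneg (sq_nonneg _) (nn _))]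
    have key : ∑ k ∈ Icc 1 K, (⟪ι (ey (k - 1)), ι (ep k)⟫ - ⟪ι (ey k), ι (ep (k + 1))⟫)
        = - (τ * ∑ k ∈ Icc 1 K, b (eu k) (ep k)) - τ * ∑ k ∈ Icc 1 K, ry k (ep k)
          - τ * ∑ k ∈ Icc 1 K, ‖C (ey k)‖ ^ 2 + τ * ∑ k ∈ Icc 1 K, rp k (ey k) := by
      simp only [Finset.mul_sum, ← Finset.sum_add_distrib, ← Finset.sum_sub_distrib,
        ← Finset.sum_neg_distrib]
      apply Finset.sum_congr rfl
      intro k hk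
      obtain ⟨h1, h2⟩ := Finset.mem_Icc.mp hk
      have e1 := E1 k h1 h2 (ep k)
      have e2 := E2 k h1 h2 (ey k)
      rw [real_inner_self_eq_norm_sq] at e2
      linarith
    have tele : ∑ k ∈ Icc 1 K, (⟪ι (ey (k - 1)), ι (ep k)⟫ - ⟪ι (ey k), ι (ep (k + 1))⟫)
        = ⟪ι (eu 0), ι (ep 1)⟫ := by
      have := aux_tele' (fun k => ⟪ι (ey (k - 1)), ι (ep k)⟫) K
      simpa [hepK, hey0] using this
    have s3 : τ * ∑ k ∈ Icc 1 K, ‖ι (eu k)‖ ^ 2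
        = τ * ∑ k ∈ Icc 1 K, b (eu k) (ep k) + τ * ∑ k ∈ Icc 1 K, ru k (eu k) := by
      rw [← mul_add, ← Finset.sum_add_distrib]
      congr 1
      apply Finset.sum_congr rfl
      intro k hk
      obtain ⟨h1, h2⟩ := Finset.mem_Icc.mp hk
      exact E3 k h1 h2
    have i1 : τ * ∑ k ∈ Icc 1 K, ru k (eu k) ≤ τ * ∑ k ∈ Icc 1 K, du k * ‖ι (eu k)‖ := by
      gcongr with k hk
      exact bru k _ (heuU k (Finset.mem_Icc.mp hk).2)
    have i2 : τ * ∑ k ∈ Icc 1 K, rp k (ey k) ≤ τ * ∑ k ∈ Icc 1 K, dp k * ‖ey k‖ := by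
      gcongr with k hk
      exact brp k _
    have i3 : -(τ * ∑ k ∈ Icc 1 K, ry k (ep k)) ≤ τ * ∑ k ∈ Icc 1 K, dy k * ‖ep k‖ := by
      rw [← mul_neg, ← Finset.sum_neg_distrib]
      gcongr with k hk
      have := bry k (-(ep k))
      rwa [map_neg, norm_neg] at this
    rw [hZ2]
    linarith
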